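/- There exist constants d₁, d₂ > 0 such that for every p with 1 < p ≤ 2: (i) for every n ≥ 1, every continuous f : B_{ℓ_pⁿ} → ℝ with ω₂(f;B_{ℓ_pⁿ}) ≤ 1 admits an affine function φ with sup_{x∈B_{ℓ_pⁿ}} |f(x) − φ(x)| ≤ d₂ (p−1)^{−1} (1 + |log(p−1)|); and (ii) there exist n ≥ 1 and a continuous f : B_{ℓ_pⁿ} → ℝ with ω₂(f;B_{ℓ_pⁿ}) ≤ 1 such that every affine function φ satisfies sup_{x∈B_{ℓ_pⁿ}} |f(x) − φ(x)| ≥ d₁ (p−1)^{−1}. (Theorem 3.8(b): d₁/(p−1) ≤ γ(p) := sup_n w₂(ℓ_pⁿ) ≤ d₂ (p−1)^{−1}(1+|log(p−1)|).) -/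

import Mathlib

open Finset

/-- `diffBound m K f c` says that the `m`-th modulus of smoothness of `f` on `K` is at most `c`,
i.e. `|Δ_h^m f(x)| ≤ c` whenever `x, x+h, …, x+mh ∈ K`. -/
def diffBound {E : Type*} [AddCommGroup E] [Module ℝ E] (m : ℕ) (K : Set E) (f : E → ℝ)
    (c : ℝ) : Prop :=
  ∀ x h : E, (∀ j : ℕ, j ≤ m → x + (j : ℝ) • h ∈ K) →
    |∑ j ∈ Finset.range (m + 1), (-1 : ℝ) ^ (m - j) * (m.choose j : ℝ) * f (x + (j : ℝ) • h)| ≤ c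

/-- The closed unit ball of `ℓ_pⁿ` (for real `p > 0`). -/
noncomputable def lpBall (n : ℕ) (p : ℝ) : Set (Fin n → ℝ) := {x | ∑ i, |x i| ^ p ≤ 1}

theorem boot (S : Set ℝ) (hb : BddAbove S) (c : ℝ)
    (h : ∀ B, (∀ y ∈ S, y ≤ B) → ∀ y ∈ S, y ≤ B / 2 + c) : ∀ y ∈ S, y ≤ 2 * c := by
  intro y hy
  have h1 : ∀ y ∈ S, y ≤ sSup S := fun y hy => le_csSup hb hy
  have h2 : sSup S ≤ sSup S / 2 + c := csSup_le ⟨y, hy⟩ (h _ h1)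
  have := h1 y hy
  linarith

theorem eta_bound (s : ℝ) (hs : |s| ≤ 1) : |s * Real.log s| ≤ 1 := by
  rcases eq_or_ne s 0 with rfl | h0
  · simp
  · have h1 : 0 < |s| := abs_pos.mpr h0
    have := Real.abs_log_mul_self_lt |s| h1 hs
    rw [abs_mul, Real.log_abs, abs_abs, mul_comm, ] at this
    rw [abs_mul]; exact this.le

theorem eta_diff (a b : ℝ) :
    |a * Real.log a - 2 * ((a + b) / 2 * Real.log ((a + b) / 2)) + b * Real.log b|
      ≤ 4 * (|a| + |b|) := by
  rcases eq_or_ne (|a| + |b|) 0 with h0 | h0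
  · have ha : a = 0 := by
      have := abs_nonneg a; have := abs_nonneg b
      exact abs_eq_zero.mp (by linarith)
    have hb : b = 0 := by
      have := abs_nonneg a; have := abs_nonneg b
      exact abs_eq_zero.mp (by linarith)
    simp [ha, hb]
  · set M := |a| + |b| with hM
    have hMp : 0 < M := lt_of_le_of_ne (by positivity) (Ne.symm h0)
    have key : ∀ s : ℝ, s * Real.log s = M * ((s / M) * Real.log (s / M)) + s * Real.log M := by
      intro s
      rcases eq_or_ne s 0 with rfl | hs
      · simp
      · rw [Real.log_div hs h0]; field_simp; ring
    have e : ∀ s : ℝ, |s| ≤ M → |(s / M) * Real.log (s / M)| ≤ 1 := by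
      intro s hs
      apply eta_bound
      rw [abs_div, abs_of_pos hMp]
      exact (div_le_one hMp).mpr hs
    have e1 := abs_le.mp (e a (by rw [hM]; linarith [abs_nonneg b]))
    have e2 := abs_le.mp (e b (by rw [hM]; linarith [abs_nonneg a]))
    have e3 := abs_le.mp (e ((a + b) / 2) (by
      rw [abs_div, abs_two]; linarith [abs_add_le a b]))
    rw [key a, key b, key ((a + b) / 2)]
    set A := a / M * Real.log (a / M)
    set B := b / M * Real.log (b / M)
    set C := (a + b) / 2 / M * Real.log ((a + b) / 2 / M)
    have : M * A + a * Real.log M - 2 * (M * C + (a + b) / 2 * Real.log M)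
        + (M * B + b * Real.log M) = M * (A - 2 * C + B) := by ring
    rw [this, abs_mul, abs_of_pos hMp, mul_comm]
    apply mul_le_mul_of_nonneg_right _ hMp.le
    rw [abs_le]; constructor <;> linarith

theorem scalar_two (p : ℝ) (hp : 1 < p) (hp2 : p ≤ 2) (a b : ℝ) :
    |a + b| ^ p + |a - b| ^ p ≤ 2 * (|a| ^ p + |b| ^ p) := by
  have key : ∀ s : ℝ, |s| ^ p = (s ^ 2) ^ (p / 2) := by
    intro s
    rw [← sq_abs, ← Real.rpow_natCast, ← Real.rpow_mul (abs_nonneg _)]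
    congr 1; push_cast; ring
  have hc := (Real.concaveOn_rpow (p := p / 2) (by linarith) (by linarith)).2
    (Set.mem_Ici.mpr (sq_nonneg (a + b)))
    (Set.mem_Ici.mpr (sq_nonneg (a - b)))
    (by norm_num : (0 : ℝ) ≤ 1 / 2) (by norm_num : (0 : ℝ) ≤ 1 / 2) (by norm_num)
  have h2 := Real.rpow_add_le_add_rpow (p := p / 2) (sq_nonneg a) (sq_nonneg b) (by linarith)
    (by linarith)
  simp only [smul_eq_mul] at hc
  have e : 1 / 2 * (a + b) ^ 2 + 1 / 2 * (a - b) ^ 2 = a ^ 2 + b ^ 2 := by ring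
  rw [e] at hc
  rw [key, key, key, key]
  linarith

theorem abs_rpow_mid (p : ℝ) (hp : 1 < p) (a b : ℝ) :
    |(a + b) / 2| ^ p ≤ (|a| ^ p + |b| ^ p) / 2 := by
  have hc := (convexOn_rpow (p := p) hp.le).2
    (Set.mem_Ici.mpr (abs_nonneg a)) (Set.mem_Ici.mpr (abs_nonneg b))
    (by norm_num : (0 : ℝ) ≤ 1 / 2) (by norm_num : (0 : ℝ) ≤ 1 / 2) (by norm_num)
  simp only [smul_eq_mul] at hc
  have : |(a + b) / 2| ^ p ≤ (1 / 2 * |a| + 1 / 2 * |b|) ^ p := by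
    apply Real.rpow_le_rpow (abs_nonneg _) _ (by linarith)
    rw [abs_div, abs_two]; linarith [abs_add_le a b]
  linarith

theorem v_double {ι : Type} [Fintype ι] (p : ℝ) (hp : 1 < p) (hp2 : p ≤ 2) (w : ι → ℝ)
    (hw : ∀ i, 0 ≤ w i) (h1 : ∑ i, w i = 1) (g : ι → ℝ) :
    ∑ x : ι × ι, ∑ y : ι × ι, (w x.1 * w x.2) * (w y.1 * w y.2) *
        |(g x.1 + g x.2) / 2 - (g y.1 + g y.2) / 2| ^ p
      ≤ 2 ^ (1 - p) * ∑ i, ∑ j, w i * w j * |g i - g j| ^ p := by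
  set V := ∑ i, ∑ j, w i * w j * |g i - g j| ^ p with hV
  have hL : ∀ G : ι → ι → ι → ι → ℝ, ∑ x : ι × ι, ∑ y : ι × ι, G x.1 x.2 y.1 y.2
      = ∑ i, ∑ i', ∑ j, ∑ j', G i j i' j' := by
    intro G
    simp only [Fintype.sum_prod_type]
    refine Finset.sum_congr rfl fun i _ => ?_
    rw [Finset.sum_comm]
  rw [hL fun i j i' j' => (w i * w j) * (w i' * w j') * |(g i + g j) / 2 - (g i' + g j') / 2| ^ p]
  set T := ∑ i, ∑ i', ∑ j, ∑ j',
    (w i * w j) * (w i' * w j') * |(g i + g j) / 2 - (g i' + g j') / 2| ^ p with hT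
  have hT2 : T = ∑ i, ∑ i', ∑ j, ∑ j',
    (w i * w j) * (w i' * w j') * |(g i + g j') / 2 - (g i' + g j) / 2| ^ p := by
    rw [hT]
    refine Finset.sum_congr rfl fun i _ => Finset.sum_congr rfl fun i' _ => ?_
    rw [Finset.sum_comm]
    refine Finset.sum_congr rfl fun i _ => Finset.sum_congr rfl fun i' _ => ?_
    ring
  have hscale : ∀ s : ℝ, |s / 2| ^ p = 2 ^ (-p) * |s| ^ p := by
    intro s
    rw [abs_div, abs_two, Real.div_rpow (abs_nonneg _) (by norm_num), Real.rpow_neg (by norm_num)]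
    field_simp
  have hTT : T + T ≤ ∑ i, ∑ i', ∑ j, ∑ j', (2 * 2 ^ (-p)) *
      ((w i * w i' * |g i - g i'| ^ p) * (w j * w j') +
        (w i * w i') * (w j * w j' * |g j - g j'| ^ p)) := by
    nth_rewrite 2 [hT2]
    rw [hT]
    simp only [← Finset.sum_add_distrib]
    refine Finset.sum_le_sum fun i _ => Finset.sum_le_sum fun i' _ =>
      Finset.sum_le_sum fun j _ => Finset.sum_le_sum fun j' _ => ?_
    have e1 : (g i + g j) / 2 - (g i' + g j') / 2 = ((g i - g i') + (g j - g j')) / 2 := by ring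
    have e2 : (g i + g j') / 2 - (g i' + g j) / 2 = ((g i - g i') - (g j - g j')) / 2 := by ring
    rw [e1, e2, hscale, hscale]
    have h := scalar_two p hp hp2 (g i - g i') (g j - g j')
    have hpos : 0 ≤ (w i * w j) * (w i' * w j') * (2 : ℝ) ^ (-p) := by
      have := hw i; have := hw j; have := hw i'; have := hw j'; positivity
    have := mul_le_mul_of_nonneg_left h hpos
    nlinarith [this]
  have hR : ∑ i, ∑ i', ∑ j, ∑ j', (2 * 2 ^ (-p)) *
      ((w i * w i' * |g i - g i'| ^ p) * (w j * w j') +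
        (w i * w i') * (w j * w j' * |g j - g j'| ^ p)) = (2 * 2 ^ (-p)) * (V + V) := by
    simp only [← Finset.mul_sum, Finset.sum_add_distrib, ← Finset.sum_mul]
    rw [← hV, h1]
    ring
  have : (2 : ℝ) ^ (1 - p) = 2 * 2 ^ (-p) := by
    rw [sub_eq_add_neg, Real.rpow_add (by norm_num), Real.rpow_one]
  rw [this]
  linarith [hTT, hR]

theorem lower_part (p : ℝ) (hp : 1 < p) (hp2 : p ≤ 2) :
    ∃ n : ℕ, 1 ≤ n ∧
      ∃ f : (Fin n → ℝ) → ℝ, ContinuousOn f (lpBall n p) ∧ diffBound 2 (lpBall n p) f 1 ∧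
        ∀ (c : ℝ) (a : Fin n → ℝ), ∃ x ∈ lpBall n p,
          (1 / 200) * (p - 1)⁻¹ ≤ |f x - (c + ∑ i, a i * x i)| := by
  set t := (p - 1)⁻¹ with ht
  have hp1 : 0 < p - 1 := by linarith
  have htp : 0 < t := inv_pos.mpr hp1
  have htm : t * (p - 1) = 1 := inv_mul_cancel₀ hp1.ne'
  set n := ⌈Real.exp t⌉₊ with hn
  have hn1 : Real.exp t ≤ n := Nat.le_ceil _
  have hn2 : (n : ℝ) < Real.exp t + 1 := Nat.ceil_lt_add_one (Real.exp_pos t).le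
  have he1 : 1 ≤ Real.exp t := Real.one_le_exp htp.le
  have hnpos : (0 : ℝ) < n := by linarith
  have hnn : 1 ≤ n := by exact_mod_cast hnpos
  have hlog : t ≤ Real.log n := (Real.le_log_iff_exp_le hnpos).mpr hn1
  have hpow : (n : ℝ) ^ (p - 1) ≤ 6 := by
    have h1 : (n : ℝ) ^ (p - 1) ≤ (2 * Real.exp t) ^ (p - 1) :=
      Real.rpow_le_rpow hnpos.le (by linarith) hp1.le
    rw [Real.mul_rpow (by norm_num) (Real.exp_pos t).le, ← Real.exp_mul, htm] at h1
    have h2 : (2 : ℝ) ^ (p - 1) ≤ 2 ^ (1 : ℝ) :=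
      Real.rpow_le_rpow_of_exponent_le (by norm_num) (by linarith)
    rw [Real.rpow_one] at h2
    have h3 := Real.exp_one_lt_d9
    have := mul_le_mul h2 h3.le (Real.exp_pos 1).le (by norm_num)
    linarith
  -- the ℓ₁ bound
  have hl1 : ∀ x ∈ lpBall n p, ∑ i, |x i| ≤ 7 := by
    intro x hx
    have hx' : ∑ i, |x i| ^ p ≤ 1 := hx
    have : ∀ i, |x i| ≤ 6 * |x i| ^ p + (n : ℝ)⁻¹ := by
      intro i
      have h0 : 0 ≤ |x i| ^ p := by positivity
      rcases le_total (|x i|) (n : ℝ)⁻¹ with h | h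
      · linarith
      · have hxp : 0 < |x i| := lt_of_lt_of_le (inv_pos.mpr hnpos) h
        have h1 : 1 ≤ |x i| * n := by
          have := mul_le_mul_of_nonneg_right h hnpos.le
          rwa [inv_mul_cancel₀ hnpos.ne'] at this
        have h2 : 1 ≤ (|x i| * n) ^ (p - 1) := Real.one_le_rpow h1 hp1.le
        rw [Real.mul_rpow hxp.le hnpos.le] at h2
        have h3 : |x i| ^ p = |x i| * |x i| ^ (p - 1) := by
          rw [Real.rpow_sub_one hxp.ne']; field_simp
        have h4 : 0 ≤ |x i| ^ (p - 1) := by positivity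
        have h5 : 1 ≤ |x i| ^ (p - 1) * 6 := h2.trans (mul_le_mul_of_nonneg_left hpow h4)
        have h6 := mul_le_mul_of_nonneg_left h5 hxp.le
        have : 0 ≤ (n : ℝ)⁻¹ := by positivity
        rw [h3]; linarith
    calc ∑ i, |x i| ≤ ∑ i, (6 * |x i| ^ p + (n : ℝ)⁻¹) := Finset.sum_le_sum fun i _ => this i
      _ = 6 * ∑ i, |x i| ^ p + 1 := by
        rw [Finset.sum_add_distrib, ← Finset.mul_sum]
        simp [hnpos.ne']
      _ ≤ 7 := by linarith
  refine ⟨n, hnn, fun x => (1 / 56) * ∑ i, x i * Real.log (x i), ?_, ?_, ?_⟩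
  · apply Continuous.continuousOn
    refine continuous_const.mul (continuous_finsetSum _ fun i _ => ?_)
    exact Real.continuous_mul_log.comp (continuous_apply i)
  · intro x h hx
    have h0 := hx 0 (by norm_num)
    have h2 := hx 2 (by norm_num)
    simp only [Nat.cast_zero, zero_smul, add_zero] at h0
    have b0 := hl1 _ h0
    have b2 := hl1 _ h2
    simp only [Finset.sum_range_succ, Finset.sum_range_zero]
    norm_num
    have e : 1 / 56 * ∑ i, x i * Real.log (x i)
        + -(2 * (1 / 56 * ∑ i, (x i + h i) * Real.log (x i + h i)))
        + 1 / 56 * ∑ i, (x i + 2 * h i) * Real.log (x i + 2 * h i)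
        = 1 / 56 * ∑ i, (x i * Real.log (x i)
          - 2 * ((x i + (x i + 2 * h i)) / 2 * Real.log ((x i + (x i + 2 * h i)) / 2))
          + (x i + 2 * h i) * Real.log (x i + 2 * h i)) := by
      rw [Finset.sum_add_distrib, Finset.sum_sub_distrib, ← Finset.mul_sum]
      have : ∀ i, (x i + (x i + 2 * h i)) / 2 = x i + h i := fun i => by ring
      simp only [this]
      ring
    have b : |∑ i, (x i * Real.log (x i)
          - 2 * ((x i + (x i + 2 * h i)) / 2 * Real.log ((x i + (x i + 2 * h i)) / 2))
          + (x i + 2 * h i) * Real.log (x i + 2 * h i))| ≤ 56 := by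
      refine (Finset.abs_sum_le_sum_abs _ _).trans ?_
      refine (Finset.sum_le_sum fun i _ => eta_diff (x i) (x i + 2 * h i)).trans ?_
      rw [← Finset.mul_sum, Finset.sum_add_distrib]
      simp at b2
      linarith
    have e' := congrArg abs e
    rw [abs_mul, abs_of_pos (by norm_num : (0 : ℝ) < 1 / 56)] at e'
    norm_num at e'
    linarith
  · intro c a
    by_contra hcon
    push Not at hcon
    set ε := 1 / 200 * t with hε
    have he : ∀ j : Fin n, |c + a j| < ε := by
      intro j
      have hm : (Pi.single j 1 : Fin n → ℝ) ∈ lpBall n p := by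
        change ∑ i, |(Pi.single j 1 : Fin n → ℝ) i| ^ p ≤ 1
        rw [Finset.sum_eq_single j]
        · simp
        · intro b _ hb
          rw [Pi.single_eq_of_ne hb, abs_zero, Real.zero_rpow (by linarith)]
        · simp
      have h := hcon _ hm
      have z1 : ∑ i, (Pi.single j 1 : Fin n → ℝ) i * Real.log ((Pi.single j 1 : Fin n → ℝ) i)
          = 0 := by
        apply Finset.sum_eq_zero
        intro i _
        rcases eq_or_ne i j with rfl | hij
        · simp
        · simp [Pi.single_eq_of_ne hij]
      have z2 : ∑ i, a i * (Pi.single j 1 : Fin n → ℝ) i = a j := by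
        rw [Finset.sum_eq_single j]
        · simp
        · intro b _ hb
          simp [Pi.single_eq_of_ne hb]
        · simp
      rw [z1, z2, mul_zero, zero_sub, abs_neg] at h
      exact h
    have hm : (fun _ => (n : ℝ)⁻¹ : Fin n → ℝ) ∈ lpBall n p := by
      change ∑ i : Fin n, |(n : ℝ)⁻¹| ^ p ≤ 1
      simp only [Finset.sum_const, Finset.card_univ, Fintype.card_fin, nsmul_eq_mul]
      have h1 : (1 : ℝ) ≤ n := by exact_mod_cast hnn
      have h2 : |(n : ℝ)⁻¹| ^ p ≤ (n : ℝ)⁻¹ ^ (1 : ℝ) := by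
        rw [abs_of_pos (inv_pos.mpr hnpos)]
        exact Real.rpow_le_rpow_of_exponent_ge (inv_pos.mpr hnpos) (inv_le_one_of_one_le₀ h1) hp.le
      rw [Real.rpow_one] at h2
      calc (n : ℝ) * |(n : ℝ)⁻¹| ^ p ≤ n * (n : ℝ)⁻¹ := mul_le_mul_of_nonneg_left h2 hnpos.le
        _ = 1 := mul_inv_cancel₀ hnpos.ne'
    have h := hcon _ hm
    simp only [Finset.sum_const, Finset.card_univ, Fintype.card_fin, nsmul_eq_mul] at h
    rw [← mul_assoc (n : ℝ), mul_inv_cancel₀ hnpos.ne', one_mul, Real.log_inv, ← Finset.sum_mul] at h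
    have hav : c + (∑ i, a i) * (n : ℝ)⁻¹ = (∑ i, (c + a i)) * (n : ℝ)⁻¹ := by
      rw [Finset.sum_add_distrib]
      simp
      field_simp
    have hb : |(∑ i, (c + a i)) * (n : ℝ)⁻¹| ≤ ε := by
      rw [abs_mul, abs_of_pos (inv_pos.mpr hnpos)]
      have : |∑ i, (c + a i)| ≤ n * ε := by
        refine (Finset.abs_sum_le_sum_abs _ _).trans ?_
        refine (Finset.sum_le_sum fun i _ => (he i).le).trans ?_
        simp
      calc _ ≤ n * ε * (n : ℝ)⁻¹ := mul_le_mul_of_nonneg_right this (inv_pos.mpr hnpos).le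
        _ = ε := by field_simp
    rw [hav] at h
    have h1 := abs_lt.mp h
    have h2 := abs_le.mp hb
    linarith [h1.1, h2.1, h2.2]

/-- A finitely supported centred probability distribution on the ball. -/
def IsDist (n : ℕ) (p : ℝ) {ι : Type} [Fintype ι] (w : ι → ℝ) (z : ι → Fin n → ℝ) : Prop :=
  (∀ i, 0 ≤ w i) ∧ ∑ i, w i = 1 ∧ (∀ i, z i ∈ lpBall n p) ∧ ∑ i, w i • z i = 0

/-- The cone generated by the shifted graph of `f`. -/
def graphCone (n : ℕ) (p : ℝ) (f : (Fin n → ℝ) → ℝ) (D : ℝ) :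
    PointedCone ℝ ((Fin n → ℝ) × ℝ) where
  carrier := {v | ∃ (ι : Type) (_ : Fintype ι) (w : ι → ℝ) (z : ι → Fin n → ℝ),
    (∀ i, 0 ≤ w i) ∧ (∀ i, z i ∈ lpBall n p) ∧ v = (∑ i, w i • z i, ∑ i, w i * (f (z i) + D))}
  add_mem' := by
    rintro _ _ ⟨ι, _, w, z, hw, hz, rfl⟩ ⟨κ, _, w', z', hw', hz', rfl⟩
    refine ⟨ι ⊕ κ, inferInstance, Sum.elim w w', Sum.elim z z', ?_, ?_, ?_⟩
    · rintro (i | i)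
      · exact hw i
      · exact hw' i
    · rintro (i | i)
      · exact hz i
      · exact hz' i
    · simp [Fintype.sum_sum_type]
  zero_mem' := ⟨Empty, inferInstance, fun _ => 0, fun _ => 0, fun i => i.elim, fun i => i.elim,
    by simp; rfl⟩
  smul_mem' := by
    rintro ⟨c, hc⟩ _ ⟨ι, _, w, z, hw, hz, rfl⟩
    refine ⟨ι, inferInstance, fun i => c * w i, z, fun i => mul_nonneg hc (hw i), hz, ?_⟩
    ext
    · simp [Finset.mul_sum, mul_assoc]
    · simp [Finset.mul_sum, mul_assoc]

theorem scale_ball (n : ℕ) (p : ℝ) (hp : 1 < p) (r : ℝ) (hr0 : 0 ≤ r) (hr : r ≤ 1)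
    (x : Fin n → ℝ) (hx : x ∈ lpBall n p) : r • x ∈ lpBall n p := by
  have hx' : ∑ i, |x i| ^ p ≤ 1 := hx
  change ∑ i, |r * x i| ^ p ≤ 1
  refine (Finset.sum_le_sum fun i _ => ?_).trans hx'
  apply Real.rpow_le_rpow (abs_nonneg _) _ (by linarith)
  rw [abs_mul, abs_of_nonneg hr0]
  exact mul_le_of_le_one_left (abs_nonneg _) hr

theorem neg_lpBall (n : ℕ) (p : ℝ) (x : Fin n → ℝ) (hx : x ∈ lpBall n p) : -x ∈ lpBall n p := by
  have hx' : ∑ i, |x i| ^ p ≤ 1 := hx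
  change ∑ i, |-x i| ^ p ≤ 1
  simpa using hx'

theorem mid_ball (n : ℕ) (p : ℝ) (hp : 1 < p) (x y : Fin n → ℝ) (hx : x ∈ lpBall n p)
    (hy : y ∈ lpBall n p) : (2⁻¹ : ℝ) • (x + y) ∈ lpBall n p := by
  have hx' : ∑ i, |x i| ^ p ≤ 1 := hx
  have hy' : ∑ i, |y i| ^ p ≤ 1 := hy
  change ∑ i, |2⁻¹ * (x i + y i)| ^ p ≤ 1
  have : ∀ i, |2⁻¹ * (x i + y i)| ^ p ≤ (|x i| ^ p + |y i| ^ p) / 2 := fun i => by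
    have := abs_rpow_mid p hp (x i) (y i)
    rwa [div_eq_inv_mul] at this
  refine (Finset.sum_le_sum fun i _ => this i).trans ?_
  rw [← Finset.sum_div, Finset.sum_add_distrib]
  linarith

/-- Normalisation: every vector is `r • z` with `z` in the ball and `r ^ p = ∑ |x i| ^ p`. -/
theorem polar (n : ℕ) (p : ℝ) (hp : 1 < p) (x : Fin n → ℝ) :
    ∃ z ∈ lpBall n p, x = ((∑ i, |x i| ^ p) ^ (1 / p)) • z := by
  set s := ∑ i, |x i| ^ p with hs
  have hs0 : 0 ≤ s := Finset.sum_nonneg fun i _ => by positivity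
  rcases hs0.eq_or_lt with h | h
  · have hx0 : x = 0 := by
      funext i
      have := (Finset.sum_eq_zero_iff_of_nonneg (fun i _ => by positivity)).mp (hs.symm.trans h.symm) i
        (Finset.mem_univ i)
      have := (Real.rpow_eq_zero (abs_nonneg _) (by linarith)).mp this
      simpa using this
    refine ⟨0, ?_, by rw [hx0]; simp⟩
    change ∑ i : Fin n, |(0 : ℝ)| ^ p ≤ 1
    simp [Real.zero_rpow (by linarith : p ≠ 0)]
  · have hr : 0 < s ^ (1 / p) := by positivity
    refine ⟨(s ^ (1 / p))⁻¹ • x, ?_, by rw [smul_smul, mul_inv_cancel₀ hr.ne', one_smul]⟩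
    change ∑ i, |(s ^ (1 / p))⁻¹ * x i| ^ p ≤ 1
    have : ∀ i, |(s ^ (1 / p))⁻¹ * x i| ^ p = s⁻¹ * |x i| ^ p := fun i => by
      rw [abs_mul, Real.mul_rpow (abs_nonneg _) (abs_nonneg _), abs_of_pos (inv_pos.mpr hr),
        Real.inv_rpow hr.le, ← Real.rpow_mul h.le, one_div, inv_mul_cancel₀ (by linarith),
        Real.rpow_one]
    simp only [this]
    rw [← Finset.mul_sum, ← hs, inv_mul_cancel₀ h.ne']

theorem sep (n : ℕ) (p : ℝ) (hp : 1 < p) (f : (Fin n → ℝ) → ℝ) (D : ℝ)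
    (hodd : ∀ x, f (-x) = - f x)
    (h : ∀ (ι : Type) (_ : Fintype ι) (w : ι → ℝ) (z : ι → Fin n → ℝ), IsDist n p w z →
      |∑ i, w i * f (z i)| ≤ D) :
    ∃ a : Fin n → ℝ, ∀ x ∈ lpBall n p, |f x - ∑ i, a i * x i| ≤ D := by
  obtain ⟨g, hg1, hg2⟩ := riesz_extension (graphCone n p f D)
    ⟨LinearMap.ker (LinearMap.fst ℝ (Fin n → ℝ) ℝ),
      (LinearMap.snd ℝ (Fin n → ℝ) ℝ).comp (Submodule.subtype _)⟩ (by
    rintro ⟨⟨x, t⟩, hx⟩ ⟨ι, _, w, z, hw, hz, he⟩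
    have hx0 : x = 0 := by simpa using hx
    change 0 ≤ t
    simp only [Prod.mk.injEq] at he
    obtain ⟨he1, he2⟩ := he
    rw [hx0] at he1
    have hW0 : 0 ≤ ∑ i, w i := Finset.sum_nonneg fun i _ => hw i
    rcases hW0.eq_or_lt with h0 | h0
    · have hz0 := (Finset.sum_eq_zero_iff_of_nonneg (fun i _ => hw i)).mp h0.symm
      rw [he2]
      apply le_of_eq
      symm
      apply Finset.sum_eq_zero
      intro i hi
      rw [hz0 i hi, zero_mul]
    · set W := ∑ i, w i with hW
      have hd : IsDist n p (fun i => W⁻¹ * w i) z := by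
        refine ⟨fun i => mul_nonneg (inv_pos.mpr h0).le (hw i), ?_, hz, ?_⟩
        · rw [← Finset.mul_sum, ← hW, inv_mul_cancel₀ h0.ne']
        · simp only [mul_smul]
          rw [← Finset.smul_sum, ← he1, smul_zero]
      have hb := (abs_le.mp (h ι _ _ z hd)).1
      have e : ∑ i, W⁻¹ * w i * f (z i) = W⁻¹ * ∑ i, w i * f (z i) := by
        rw [Finset.mul_sum]; simp only [mul_assoc]
      rw [e] at hb
      have := mul_le_mul_of_nonneg_left hb h0.le
      rw [← mul_assoc, mul_inv_cancel₀ h0.ne', one_mul] at this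
      simp only [mul_add, Finset.sum_add_distrib, ← Finset.sum_mul] at he2
      rw [he2, ← hW]
      linarith) (by
    rintro ⟨y, s⟩
    obtain ⟨z, hz, hy⟩ := polar n p hp y
    set r := (∑ i, |y i| ^ p) ^ (1 / p) with hr
    have hr0 : 0 ≤ r := Real.rpow_nonneg (Finset.sum_nonneg fun i _ => by positivity) _
    refine ⟨⟨(0, r * (f z + D) - s), by simp⟩, ?_⟩
    refine ⟨Unit, inferInstance, fun _ => r, fun _ => z, fun _ => hr0, fun _ => hz, ?_⟩
    ext
    · simp [← hy]
    · simp)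
  have hgt : ∀ t : ℝ, g (0, t) = t := fun t => hg1 ⟨(0, t), by simp⟩
  have hup : ∀ x ∈ lpBall n p, -g (x, 0) ≤ f x + D := by
    intro x hx
    have h1 : ((x, f x + D) : (Fin n → ℝ) × ℝ) ∈ graphCone n p f D :=
      ⟨Unit, inferInstance, fun _ => 1, fun _ => x, fun _ => zero_le_one, fun _ => hx, by simp⟩
    have h2 := hg2 _ h1
    have h3 : ((x, f x + D) : (Fin n → ℝ) × ℝ) = (x, 0) + (0, f x + D) := by simp
    rw [h3, map_add, hgt] at h2
    linarith
  set L : (Fin n → ℝ) →ₗ[ℝ] ℝ := -(g.comp (LinearMap.inl ℝ (Fin n → ℝ) ℝ)) with hL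
  have hLx : ∀ x, L x = -g (x, 0) := fun x => by simp [hL]
  refine ⟨fun i => L (Pi.single i 1), fun x hx => ?_⟩
  have hsum : ∑ i, L (Pi.single i 1) * x i = L x := by
    conv_rhs => rw [← Finset.univ_sum_single x, map_sum]
    refine Finset.sum_congr rfl fun i _ => ?_
    have : Pi.single i (x i) = x i • (Pi.single i 1 : Fin n → ℝ) := by
      rw [← Pi.single_smul]; simp
    rw [this, map_smul, smul_eq_mul, mul_comm]
  rw [hsum]
  have h1 := hup x hx
  have h2 := hup (-x) (neg_lpBall n p x hx)
  rw [← hLx] at h1 h2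
  rw [hodd, map_neg] at h2
  rw [abs_le]; constructor <;> linarith

theorem homog (n : ℕ) (p : ℝ) (hp : 1 < p) (f : (Fin n → ℝ) → ℝ) (B : ℝ)
    (hB : ∀ x ∈ lpBall n p, |f x| ≤ B) (hf0 : f 0 = 0)
    (hf : ∀ x ∈ lpBall n p, ∀ y ∈ lpBall n p, |f x + f y - 2 * f ((2⁻¹ : ℝ) • (x + y))| ≤ 1)
    (x : Fin n → ℝ) (hx : x ∈ lpBall n p) (r : ℝ) (hr0 : 0 ≤ r) (hr1 : r ≤ 1) :
    |f (r • x) - r * f x| ≤ 1 := by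
  have key := boot {y | ∃ r, 0 ≤ r ∧ r ≤ 1 ∧ y = |f (r • x) - r * f x|} ⟨2 * B, by
    rintro _ ⟨r, h0, h1, rfl⟩
    have b1 := hB _ (scale_ball n p hp r h0 h1 x hx)
    have b2 := hB x hx
    have b3 : |r * f x| ≤ B := by
      rw [abs_mul, abs_of_nonneg h0]
      exact (mul_le_of_le_one_left (abs_nonneg _) h1).trans b2
    have := abs_sub (f (r • x)) (r * f x)
    linarith⟩ (1 / 2) (by
    rintro C hC _ ⟨r, h0, h1, rfl⟩
    have hC' : ∀ r, 0 ≤ r → r ≤ 1 → |f (r • x) - r * f x| ≤ C := fun r h0 h1 =>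
      hC _ ⟨r, h0, h1, rfl⟩
    rcases le_total r (1 / 2) with hr | hr
    · have a1 := abs_le.mp (hC' (2 * r) (by linarith) (by linarith))
      have a2 := hf ((2 * r) • x) (scale_ball n p hp _ (by linarith) (by linarith) x hx)
        ((0 : ℝ) • x) (scale_ball n p hp _ le_rfl zero_le_one x hx)
      have e : (2⁻¹ : ℝ) • ((2 * r) • x + (0 : ℝ) • x) = r • x := by
        rw [← add_smul, smul_smul]; congr 1; ring
      rw [e, zero_smul, hf0] at a2
      have a2 := abs_le.mp a2
      rw [abs_le]; constructor <;> linarith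
    · have a1 := abs_le.mp (hC' (2 * r - 1) (by linarith) (by linarith))
      have a2 := hf ((2 * r - 1) • x) (scale_ball n p hp _ (by linarith) (by linarith) x hx) x hx
      have e : (2⁻¹ : ℝ) • ((2 * r - 1) • x + x) = r • x := by
        nth_rewrite 2 [← one_smul ℝ x]
        rw [← add_smul, smul_smul]; congr 1; ring
      rw [e] at a2
      have a2 := abs_le.mp a2
      rw [abs_le]; constructor <;> linarith)
  have := key _ ⟨r, hr0, hr1, rfl⟩
  linarith

/-- The dispersion of a distribution. -/
noncomputable def disp (n : ℕ) (p : ℝ) {ι : Type} [Fintype ι] (w : ι → ℝ) (z : ι → Fin n → ℝ) : ℝ :=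
  ∑ l, ∑ i, ∑ j, w i * w j * |z i l - z j l| ^ p

theorem doubling (n : ℕ) (p : ℝ) (hp : 1 < p) (hp2 : p ≤ 2) (f : (Fin n → ℝ) → ℝ)
    (hf : ∀ x ∈ lpBall n p, ∀ y ∈ lpBall n p, |f x + f y - 2 * f ((2⁻¹ : ℝ) • (x + y))| ≤ 1)
    (ι : Type) (_ : Fintype ι) (w : ι → ℝ) (z : ι → Fin n → ℝ) (hd : IsDist n p w z) (k : ℕ) :
    ∃ (κ : Type) (_ : Fintype κ) (w' : κ → ℝ) (z' : κ → Fin n → ℝ), IsDist n p w' z' ∧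
      |∑ i, w i * f (z i) - ∑ i, w' i * f (z' i)| ≤ k / 2 ∧
      disp n p w' z' ≤ (2 ^ (1 - p)) ^ k * disp n p w z := by
  induction k with
  | zero => exact ⟨ι, _, w, z, hd, by simp, by simp⟩
  | succ k ih =>
    obtain ⟨κ, _, w', z', ⟨h0, h1, hz, hm⟩, hk, hv⟩ := ih
    have hsum2 : ∀ G : κ → ℝ, ∑ x : κ × κ, w' x.1 * w' x.2 * ((G x.1 + G x.2) / 2)
        = ∑ i, w' i * G i := by
      intro G
      have e : ∀ x : κ × κ, w' x.1 * w' x.2 * ((G x.1 + G x.2) / 2)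
        = ((w' x.1 * G x.1) * w' x.2 + w' x.1 * (w' x.2 * G x.2)) / 2 := fun x => by ring
      simp only [e, Fintype.sum_prod_type]
      simp only [← Finset.sum_div, Finset.sum_add_distrib, ← Finset.mul_sum, ← Finset.sum_mul, h1]
      ring
    have hW : ∑ x : κ × κ, w' x.1 * w' x.2 = 1 := by
      simp only [Fintype.sum_prod_type, ← Finset.mul_sum, h1, mul_one]
    refine ⟨κ × κ, inferInstance, fun x => w' x.1 * w' x.2,
      fun x => (2⁻¹ : ℝ) • (z' x.1 + z' x.2), ⟨?_, hW, ?_, ?_⟩, ?_, ?_⟩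
    · exact fun x => mul_nonneg (h0 _) (h0 _)
    · exact fun x => mid_ball n p hp _ _ (hz _) (hz _)
    · funext l
      have hl := congrFun hm l
      simp only [Finset.sum_apply, Pi.smul_apply, smul_eq_mul, Pi.add_apply, Pi.zero_apply] at hl ⊢
      have := hsum2 fun i => z' i l
      rw [hl] at this
      rw [← this]
      refine Finset.sum_congr rfl fun x _ => ?_
      ring
    · have hstep : |∑ i, w' i * f (z' i) -
          ∑ x : κ × κ, w' x.1 * w' x.2 * f ((2⁻¹ : ℝ) • (z' x.1 + z' x.2))| ≤ 1 / 2 := by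
        rw [← hsum2 fun i => f (z' i), ← Finset.sum_sub_distrib]
        refine (Finset.abs_sum_le_sum_abs _ _).trans ?_
        have : ∀ x : κ × κ, |w' x.1 * w' x.2 * ((f (z' x.1) + f (z' x.2)) / 2) -
            w' x.1 * w' x.2 * f ((2⁻¹ : ℝ) • (z' x.1 + z' x.2))| ≤ w' x.1 * w' x.2 * (1 / 2) := by
          intro x
          have hh := abs_le.mp (hf _ (hz x.1) _ (hz x.2))
          rw [← mul_sub, abs_mul, abs_of_nonneg (mul_nonneg (h0 _) (h0 _))]
          refine mul_le_mul_of_nonneg_left ?_ (mul_nonneg (h0 _) (h0 _))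
          rw [abs_le]; constructor <;> linarith
        refine (Finset.sum_le_sum fun x _ => this x).trans ?_
        rw [← Finset.sum_mul, hW, one_mul]
      have a1 := abs_le.mp hk
      have a2 := abs_le.mp hstep
      push_cast
      rw [abs_le]; constructor <;> linarith
    · have hq : (0 : ℝ) ≤ 2 ^ (1 - p) := by positivity
      calc _ ≤ 2 ^ (1 - p) * disp n p w' z' := by
            unfold disp
            rw [Finset.mul_sum]
            refine Finset.sum_le_sum fun l _ => ?_
            have := v_double p hp hp2 w' h0 h1 fun i => z' i l
            refine le_trans (le_of_eq ?_) this
            refine Finset.sum_congr rfl fun x _ => Finset.sum_congr rfl fun y _ => ?_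
            simp only [Pi.smul_apply, Pi.add_apply, smul_eq_mul, div_eq_inv_mul]
        _ ≤ 2 ^ (1 - p) * ((2 ^ (1 - p)) ^ k * disp n p w z) := mul_le_mul_of_nonneg_left hv hq
        _ = _ := by ring

theorem disp_le (n : ℕ) (p : ℝ) (hp : 1 < p) (hp2 : p ≤ 2) {ι : Type} [Fintype ι] (w : ι → ℝ)
    (z : ι → Fin n → ℝ) (hd : IsDist n p w z) : disp n p w z ≤ 4 := by
  obtain ⟨h0, h1, hz, -⟩ := hd
  have hsc : ∀ a b : ℝ, |a - b| ^ p ≤ 2 * (|a| ^ p + |b| ^ p) := fun a b => by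
    have := scalar_two p hp hp2 a b
    have : 0 ≤ |a + b| ^ p := by positivity
    linarith
  have e : disp n p w z = ∑ i, ∑ j, w i * w j * ∑ l, |z i l - z j l| ^ p := by
    unfold disp
    rw [Finset.sum_comm]
    refine Finset.sum_congr rfl fun i _ => ?_
    rw [Finset.sum_comm]
    simp only [Finset.mul_sum]
  rw [e]
  have : ∀ i j, w i * w j * ∑ l, |z i l - z j l| ^ p ≤ w i * w j * 4 := by
    intro i j
    refine mul_le_mul_of_nonneg_left ?_ (mul_nonneg (h0 _) (h0 _))
    have hi : ∑ l, |z i l| ^ p ≤ 1 := hz i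
    have hj : ∑ l, |z j l| ^ p ≤ 1 := hz j
    refine (Finset.sum_le_sum fun l _ => hsc _ _).trans ?_
    rw [← Finset.mul_sum, Finset.sum_add_distrib]
    linarith
  refine (Finset.sum_le_sum fun i _ => Finset.sum_le_sum fun j _ => this i j).trans ?_
  simp only [← Finset.sum_mul, ← Finset.mul_sum, h1]
  norm_num

theorem moment_le_disp (n : ℕ) (p : ℝ) (hp : 1 < p) {ι : Type} [Fintype ι] (w : ι → ℝ)
    (z : ι → Fin n → ℝ) (hd : IsDist n p w z) : ∑ i, w i * ∑ l, |z i l| ^ p ≤ disp n p w z := by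
  obtain ⟨h0, h1, hz, hm⟩ := hd
  unfold disp
  have e : ∑ i, w i * ∑ l, |z i l| ^ p = ∑ l, ∑ i, w i * |z i l| ^ p := by
    simp only [Finset.mul_sum]
    rw [Finset.sum_comm]
  rw [e]
  refine Finset.sum_le_sum fun l _ => Finset.sum_le_sum fun i _ => ?_
  simp only [mul_assoc, ← Finset.mul_sum]
  refine mul_le_mul_of_nonneg_left ?_ (h0 i)
  have hl := congrFun hm l
  simp only [Finset.sum_apply, Pi.smul_apply, smul_eq_mul, Pi.zero_apply] at hl
  have e2 : z i l = ∑ j, w j * (z i l - z j l) := by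
    simp only [mul_sub, Finset.sum_sub_distrib, hl, ← Finset.sum_mul, h1]
    ring
  have h2 : |z i l| ≤ ∑ j, w j * |z i l - z j l| := by
    conv_lhs => rw [e2]
    refine (Finset.abs_sum_le_sum_abs _ _).trans (le_of_eq ?_)
    refine Finset.sum_congr rfl fun j _ => ?_
    rw [abs_mul, abs_of_nonneg (h0 j)]
  refine (Real.rpow_le_rpow (abs_nonneg _) h2 (by linarith)).trans ?_
  exact Real.rpow_arith_mean_le_arith_mean_rpow _ _ _ (fun j _ => h0 j) h1
    (fun j _ => abs_nonneg _) hp.le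

theorem key_bound (n : ℕ) (p : ℝ) (hp : 1 < p) (hp2 : p ≤ 2) (f : (Fin n → ℝ) → ℝ) (B : ℝ)
    (hB : ∀ x ∈ lpBall n p, |f x| ≤ B) (hf0 : f 0 = 0)
    (hf : ∀ x ∈ lpBall n p, ∀ y ∈ lpBall n p, |f x + f y - 2 * f ((2⁻¹ : ℝ) • (x + y))| ≤ 1)
    (ι : Type) (_ : Fintype ι) (w : ι → ℝ) (z : ι → Fin n → ℝ) (hd : IsDist n p w z) :
    |∑ i, w i * f (z i)| ≤ 7 * (p - 1)⁻¹ := by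
  have hp1 : 0 < p - 1 := by linarith
  set t := (p - 1)⁻¹ with ht
  have htp : 0 < t := inv_pos.mpr hp1
  have htm : t * (p - 1) = 1 := inv_mul_cancel₀ hp1.ne'
  have ht1 : 1 ≤ t := by nlinarith
  set k := ⌈4 * t⌉₊ with hk
  have hk1 : 4 * t ≤ k := Nat.le_ceil _
  have hk2 : (k : ℝ) < 4 * t + 1 := Nat.ceil_lt_add_one (by positivity)
  have hB0 : ∀ (ι : Type) (_ : Fintype ι) (w : ι → ℝ) (z : ι → Fin n → ℝ), IsDist n p w z →
      |∑ i, w i * f (z i)| ≤ B := by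
    rintro ι _ w z ⟨h0, h1, hz, -⟩
    refine (Finset.abs_sum_le_sum_abs _ _).trans ?_
    have : ∀ i, |w i * f (z i)| ≤ w i * B := fun i => by
      rw [abs_mul, abs_of_nonneg (h0 i)]
      exact mul_le_mul_of_nonneg_left (hB _ (hz i)) (h0 i)
    refine (Finset.sum_le_sum fun i _ => this i).trans ?_
    rw [← Finset.sum_mul, h1, one_mul]
  have key := boot {y | ∃ (ι : Type) (_ : Fintype ι) (w : ι → ℝ) (z : ι → Fin n → ℝ),
    IsDist n p w z ∧ y = |∑ i, w i * f (z i)|} ⟨B, by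
      rintro _ ⟨ι, _, w, z, hd, rfl⟩
      exact hB0 _ _ _ _ hd⟩ (k / 2 + 1) (by
    rintro D hD _ ⟨ι, _, w, z, hd, rfl⟩
    have hD' : ∀ (ι : Type) (_ : Fintype ι) (w : ι → ℝ) (z : ι → Fin n → ℝ), IsDist n p w z →
      |∑ i, w i * f (z i)| ≤ D := fun ι _ w z h => hD _ ⟨ι, _, w, z, h, rfl⟩
    have hDnn : 0 ≤ D := (abs_nonneg _).trans (hD' _ _ _ _ hd)
    obtain ⟨κ, _, w', z', hd', hk', hv⟩ := doubling n p hp hp2 f hf ι _ w z hd k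
    have hmom := moment_le_disp n p hp w' z' hd'
    have hdisp := disp_le n p hp hp2 w z hd
    obtain ⟨h0, h1, hz, hm⟩ := hd'
    have hQ : ∑ i, w' i * ∑ l, |z' i l| ^ p ≤ 2 ^ (-p) := by
      have e1 : ((2 : ℝ) ^ (1 - p)) ^ k ≤ 2 ^ (-4 : ℝ) := by
        rw [← Real.rpow_natCast, ← Real.rpow_mul (by norm_num)]
        apply Real.rpow_le_rpow_of_exponent_le (by norm_num)
        nlinarith
      have e2 : (2 : ℝ) ^ (-4 : ℝ) * 4 = 2 ^ (-2 : ℝ) := by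
        rw [Real.rpow_neg (by norm_num), Real.rpow_neg (by norm_num)]; norm_num
      have e3 : (2 : ℝ) ^ (-2 : ℝ) ≤ 2 ^ (-p) :=
        Real.rpow_le_rpow_of_exponent_le (by norm_num) (by linarith)
      calc _ ≤ _ := hmom
        _ ≤ _ := hv
        _ ≤ ((2 : ℝ) ^ (1 - p)) ^ k * 4 := mul_le_mul_of_nonneg_left hdisp (by positivity)
        _ ≤ 2 ^ (-4 : ℝ) * 4 := mul_le_mul_of_nonneg_right e1 (by norm_num)
        _ ≤ _ := e2.trans_le e3
    choose u hu hzu using fun i => polar n p hp (z' i)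
    set r : κ → ℝ := fun i => (∑ l, |z' i l| ^ p) ^ (1 / p) with hr
    have hs0 : ∀ i, 0 ≤ ∑ l, |z' i l| ^ p := fun i => Finset.sum_nonneg fun l _ => by positivity
    have hr0 : ∀ i, 0 ≤ r i := fun i => Real.rpow_nonneg (hs0 i) _
    have hr1 : ∀ i, r i ≤ 1 := fun i => Real.rpow_le_one (hs0 i) (hz i) (by positivity)
    have hzu' : ∀ i, z' i = r i • u i := hzu
    have hrp : ∀ i, r i ^ p = ∑ l, |z' i l| ^ p := fun i => by
      rw [hr]
      simp only
      rw [← Real.rpow_mul (hs0 i), one_div, inv_mul_cancel₀ (by linarith), Real.rpow_one]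
    have hER : ∑ i, w' i * r i ≤ 1 / 2 := by
      refine (Real.arith_mean_le_rpow_mean _ _ _ (fun i _ => h0 i) h1 (fun i _ => hr0 i)
        hp.le).trans ?_
      simp only [hrp]
      refine (Real.rpow_le_rpow (Finset.sum_nonneg fun i _ => mul_nonneg (h0 i) (hs0 i)) hQ
        (by positivity)).trans ?_
      rw [← Real.rpow_mul (by norm_num), neg_mul, mul_one_div, div_self (by linarith),
        Real.rpow_neg_one]
      norm_num
    -- replace `f (z' i)` by `r i * f (u i)`
    have hrep : |∑ i, w' i * f (z' i) - ∑ i, w' i * r i * f (u i)| ≤ 1 := by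
      rw [← Finset.sum_sub_distrib]
      refine (Finset.abs_sum_le_sum_abs _ _).trans ?_
      have : ∀ i, |w' i * f (z' i) - w' i * r i * f (u i)| ≤ w' i * 1 := fun i => by
        rw [mul_assoc, ← mul_sub, abs_mul, abs_of_nonneg (h0 i), hzu' i]
        exact mul_le_mul_of_nonneg_left
          (homog n p hp f B hB hf0 hf (u i) (hu i) (r i) (hr0 i) (hr1 i)) (h0 i)
      refine (Finset.sum_le_sum fun i _ => this i).trans ?_
      rw [← Finset.sum_mul, h1, one_mul]
    have hlast : |∑ i, w' i * r i * f (u i)| ≤ D / 2 := by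
      set W := ∑ i, w' i * r i with hW
      have hW0 : 0 ≤ W := Finset.sum_nonneg fun i _ => mul_nonneg (h0 i) (hr0 i)
      rcases hW0.eq_or_lt with hz0 | hpos
      · have hzz := (Finset.sum_eq_zero_iff_of_nonneg
          (fun i _ => mul_nonneg (h0 i) (hr0 i))).mp (hW.symm.trans hz0.symm)
        rw [Finset.sum_eq_zero fun i hi => by rw [hzz i hi, zero_mul]]
        rw [abs_zero]; positivity
      · have hdd : IsDist n p (fun i => W⁻¹ * (w' i * r i)) u := by
          refine ⟨fun i => mul_nonneg (inv_pos.mpr hpos).le (mul_nonneg (h0 i) (hr0 i)), ?_, hu, ?_⟩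
          · rw [← Finset.mul_sum, ← hW, inv_mul_cancel₀ hpos.ne']
          · simp only [mul_smul]
            rw [← Finset.smul_sum]
            simp only [← hzu', hm, smul_zero]
        have hb := hD' _ _ _ _ hdd
        have e : ∑ i, W⁻¹ * (w' i * r i) * f (u i) = W⁻¹ * ∑ i, w' i * r i * f (u i) := by
          rw [Finset.mul_sum]; simp only [mul_assoc]
        rw [e, abs_mul, abs_of_pos (inv_pos.mpr hpos), inv_mul_le_iff₀ hpos] at hb
        nlinarith
    have a1 := abs_le.mp hk'
    have a2 := abs_le.mp hrep
    have a3 := abs_le.mp hlast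
    rw [abs_le]; constructor <;> linarith)
  have := key _ ⟨ι, _, w, z, hd, rfl⟩
  linarith

theorem ball_compact (n : ℕ) (p : ℝ) (hp : 1 < p) : IsCompact (lpBall n p) := by
  apply Metric.isCompact_of_isClosed_isBounded
  · apply isClosed_le _ continuous_const
    refine continuous_finsetSum _ fun i _ => ?_
    exact ((continuous_apply i).abs).rpow_const fun x => Or.inr (by linarith)
  · refine (Metric.isBounded_closedBall (x := (0 : Fin n → ℝ)) (r := 1)).subset ?_
    intro x hx
    have hx' : ∑ i, |x i| ^ p ≤ 1 := hx
    rw [mem_closedBall_zero_iff, pi_norm_le_iff_of_nonneg zero_le_one]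
    intro i
    have h1 : |x i| ^ p ≤ 1 :=
      (Finset.single_le_sum (f := fun i => |x i| ^ p) (fun i _ => by positivity)
        (Finset.mem_univ i)).trans hx'
    rw [Real.norm_eq_abs]
    by_contra hc
    push Not at hc
    have := Real.one_lt_rpow hc (by linarith : 0 < p)
    linarith

theorem upper_part (p : ℝ) (hp : 1 < p) (hp2 : p ≤ 2) (n : ℕ)
    (f : (Fin n → ℝ) → ℝ) (hc : ContinuousOn f (lpBall n p)) (hf : diffBound 2 (lpBall n p) f 1) :
    ∃ (c : ℝ) (a : Fin n → ℝ), ∀ x ∈ lpBall n p,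
      |f x - (c + ∑ i, a i * x i)| ≤ 8 * (p - 1)⁻¹ := by
  have hmid : ∀ x ∈ lpBall n p, ∀ y ∈ lpBall n p,
      |f x + f y - 2 * f ((2⁻¹ : ℝ) • (x + y))| ≤ 1 := by
    intro x hx y hy
    have e1 : x + (2⁻¹ : ℝ) • (y - x) = (2⁻¹ : ℝ) • (x + y) := by
      funext i; simp; ring
    have e2 : x + (2 : ℝ) • (2⁻¹ : ℝ) • (y - x) = y := by
      funext i; simp
    have := hf x ((2⁻¹ : ℝ) • (y - x)) (by
      intro j hj
      interval_cases j
      · simpa using hx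
      · rw [Nat.cast_one, one_smul, e1]; exact mid_ball n p hp x y hx hy
      · rw [Nat.cast_ofNat, e2]; exact hy)
    simp only [Finset.sum_range_succ, Finset.sum_range_zero, Nat.cast_ofNat, Nat.cast_one, e2,
      one_smul, e1, Nat.cast_zero, zero_smul, add_zero] at this
    generalize (2⁻¹ : ℝ) • (x + y) = m at this ⊢
    norm_num at this
    convert this using 2
    ring
  obtain ⟨B, hB⟩ := (ball_compact n p hp).exists_bound_of_continuousOn hc
  have h0m : (0 : Fin n → ℝ) ∈ lpBall n p := by
    change ∑ i : Fin n, |(0 : ℝ)| ^ p ≤ 1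
    simp [Real.zero_rpow (by linarith : p ≠ 0)]
  set g : (Fin n → ℝ) → ℝ := fun x => (f x - f (-x)) / 2 with hg
  have hgB : ∀ x ∈ lpBall n p, |g x| ≤ B := by
    intro x hx
    have b1 := abs_le.mp (hB x hx)
    have b2 := abs_le.mp (hB _ (neg_lpBall n p x hx))
    simp only [hg]
    rw [abs_le]; constructor <;> linarith
  have hgm : ∀ x ∈ lpBall n p, ∀ y ∈ lpBall n p,
      |g x + g y - 2 * g ((2⁻¹ : ℝ) • (x + y))| ≤ 1 := by
    intro x hx y hy
    have b1 := abs_le.mp (hmid x hx y hy)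
    have b2 := abs_le.mp (hmid _ (neg_lpBall n p x hx) _ (neg_lpBall n p y hy))
    have e : (2⁻¹ : ℝ) • (-x + -y) = -((2⁻¹ : ℝ) • (x + y)) := by
      rw [← neg_add, smul_neg]
    rw [e] at b2
    simp only [hg]
    rw [abs_le]; constructor <;> linarith
  obtain ⟨a, ha⟩ := sep n p hp g (7 * (p - 1)⁻¹) (fun x => by simp only [hg, neg_neg]; ring)
    (key_bound n p hp hp2 g B hgB (by simp [hg]) hgm)
  have ht1 : 1 ≤ (p - 1)⁻¹ := (one_le_inv₀ (by linarith)).mpr (by linarith)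
  refine ⟨f 0, a, fun x hx => ?_⟩
  have b1 := abs_le.mp (ha x hx)
  have b2 := hmid x hx _ (neg_lpBall n p x hx)
  rw [add_neg_cancel, smul_zero] at b2
  have b2 := abs_le.mp b2
  simp only [hg] at b1
  rw [abs_le]; constructor <;> linarith

/-- Theorem 3.8(b): `d₁/(p−1) ≤ γ(p) = sup_n w₂(ℓ_pⁿ) ≤ d₂ (p−1)⁻¹(1+|log(p−1)|)`
for `1 < p ≤ 2`. -/
theorem whitney_lp_small_p :
    ∃ d₁ d₂ : ℝ, 0 < d₁ ∧ 0 < d₂ ∧ ∀ p : ℝ, 1 < p → p ≤ 2 →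
      ((∀ n : ℕ, 1 ≤ n →
          ∀ f : (Fin n → ℝ) → ℝ, ContinuousOn f (lpBall n p) → diffBound 2 (lpBall n p) f 1 →
            ∃ (c : ℝ) (a : Fin n → ℝ), ∀ x ∈ lpBall n p,
              |f x - (c + ∑ i, a i * x i)| ≤ d₂ * (p - 1)⁻¹ * (1 + |Real.log (p - 1)|)) ∧
       (∃ n : ℕ, 1 ≤ n ∧
          ∃ f : (Fin n → ℝ) → ℝ, ContinuousOn f (lpBall n p) ∧ diffBound 2 (lpBall n p) f 1 ∧
            ∀ (c : ℝ) (a : Fin n → ℝ), ∃ x ∈ lpBall n p,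
              d₁ * (p - 1)⁻¹ ≤ |f x - (c + ∑ i, a i * x i)|)) := by
  refine ⟨1 / 200, 8, by norm_num, by norm_num, fun p hp hp2 => ⟨?_, lower_part p hp hp2⟩⟩
  intro n _ f hc hf
  obtain ⟨c, a, h⟩ := upper_part p hp hp2 n f hc hf
  refine ⟨c, a, fun x hx => (h x hx).trans ?_⟩
  have h1 : 0 < p - 1 := by linarith
  have h2 : 0 ≤ 8 * (p - 1)⁻¹ := by positivity
  have h3 := abs_nonneg (Real.log (p - 1))
  exact le_mul_of_one_le_right h2 (by linarith)
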